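/- Let k be a positive integer, let δ be an integer with 0 ≤ δ < k, and let e ≥ 0 be an integer with 2δ ≤ 2^e. Set m = 2^e − δ (assumed positive). Then in the tensor product R(k,m) ⊗ R(k,m) over ZMod 2, the element (z_1·…·z_{k−δ})^{2^{e+1}−1} · z_{k−δ+1}^{2^{e+1}−2} · (z_{k−δ+2}·…·z_k)^{2^e−1} is nonzero, where z_i = x_i ⊗ 1 + 1 ⊗ x_i, and where a factor is omitted when its index range is empty (so for δ = 0 the claim is that (z_1·…·z_k)^{2^{e+1}−1} ≠ 0). -/

import Mathlib

/-!
Put `n = m + k` and `l = k - δ`, so that `n = 2 ^ e + l`, index the generators `x_0, …, x_{k-1}`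
from zero, and write `X_i = x_i ⊗ 1`, `Y_i = 1 ⊗ x_i`. The product of powers of the elements
`z_i = X_i + Y_i` divides `T ⊗ T ≠ 0`, where `T = ∏ x_i ^ (n - 1 - i)` is the top class of `R(k,m)`.

* `T ≠ 0`: the relation `h_{n-j}(x_0, …, x_j) = 0` is monic of degree `n - j` in `x_j`, so
  adjoining one root after another gives a ring in which all the relations hold and `T` survives.
* The partial product `T_j = ∏_{i<j} x_i ^ (n - 1 - i)` kills `x_0, …, x_{j-1}`, so after
  multiplication by `T_j` these variables drop out of the relations; in particular
  `T_j x_j ^ (n - j) = 0`.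
* The binomial coefficients of `p ^ s - 1` are `±1` modulo `p`. So if `Q` kills `x ^ (d + 1)` and
  `y ^ (d + 1)` and `p ^ s - 1 ≤ 2 d`, a monomial multiple of `Q (x + y) ^ (p ^ s - 1)` is
  `± Q x ^ d y ^ d`. This handles one at a time the variables with exponent `2 ^ (e + 1) - 1`
  (those with `j < l`) and those with exponent `2 ^ e - 1` (those with `j > l`).
* The exponent `2 ^ (e + 1) - 2` at `j = l` is out of reach of that argument. For `δ > 0` the
  variables `l - 1` and `l` are treated together: with `q = 2 ^ e`, the relation
  `h_q(x_{l-1}, x_l) = 0` turns `z_{l-1} ^ (2q - 1) z_l ^ q` into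
  `X_{l-1} ^ q Y_{l-1} ^ q (X_l ^ (q-1) + Y_l ^ (q-1))`, and multiplying by `X_l z_l ^ (q - 2)`
  gives the required monomial.
-/

open scoped TensorProduct

/-- Complete homogeneous symmetric polynomial of degree `d` in a list of elements
of a commutative (semi)ring: `h_d(l)`. -/
noncomputable def completeHomog {R : Type*} [CommSemiring R] : List R → ℕ → R
  | [], 0 => 1
  | [], _ + 1 => 0
  | x :: l, d => ∑ t ∈ Finset.range (d + 1), x ^ t * completeHomog l (d - t)

/-- Elementary symmetric polynomial of degree `d` in a list of elements: `e_d(l)`. -/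
noncomputable def elemSymm {R : Type*} [CommSemiring R] : List R → ℕ → R
  | _, 0 => 1
  | [], _ + 1 => 0
  | x :: l, d + 1 => elemSymm l (d + 1) + x * elemSymm l d

/-- The ideal of `(ZMod 2)[x_1, …, x_k]` generated by the complete homogeneous
symmetric polynomials `h_{m+i}(x_1, …, x_{k+1-i})` for `1 ≤ i ≤ k`. -/
noncomputable def flagIdeal (k m : ℕ) : Ideal (MvPolynomial (Fin k) (ZMod 2)) :=
  Ideal.span { p | ∃ i : ℕ, 1 ≤ i ∧ i ≤ k ∧
    p = completeHomog (((List.finRange k).take (k + 1 - i)).map MvPolynomial.X) (m + i) }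

/-- `R(k,m)`, the quotient of `(ZMod 2)[x_1, …, x_k]` by `flagIdeal k m`;
this is the mod-2 cohomology ring of the real flag manifold `F(1^k, m)`. -/
abbrev FlagRing (k m : ℕ) : Type :=
  MvPolynomial (Fin k) (ZMod 2) ⧸ flagIdeal k m

/-- The image of the variable `x_{j+1}` in `R(k,m)` (`j` is 0-indexed). -/
noncomputable def xGen (k m : ℕ) (j : Fin k) : FlagRing k m :=
  Ideal.Quotient.mk (flagIdeal k m) (MvPolynomial.X j)

/-- The zero-divisor `z_{j+1} = x_{j+1} ⊗ 1 + 1 ⊗ x_{j+1}` in `R(k,m) ⊗ R(k,m)`. -/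
noncomputable def zGen (k m : ℕ) (j : Fin k) :
    FlagRing k m ⊗[ZMod 2] FlagRing k m :=
  xGen k m j ⊗ₜ 1 + 1 ⊗ₜ xGen k m j

/-- `x_{i+1,j+1}` in the `s`-fold tensor power `R(k,m)^{⊗ s}`: the element having
`x_{j+1}` in the `(i+1)`-st tensor factor and `1` elsewhere (`i`, `j` 0-indexed). -/
noncomputable def xT (k m s : ℕ) (i : Fin s) (j : Fin k) :
    ⨂[ZMod 2] _ : Fin s, FlagRing k m :=
  PiTensorProduct.tprod (ZMod 2) (fun t => if t = i then xGen k m j else 1)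

/-- The `s`-th zero-divisor `z_{i+1,j+1} = x_{1,j+1} + x_{i+1,j+1}` in `R(k,m)^{⊗ s}`. -/
noncomputable def zT (k m s : ℕ) (hs : 0 < s) (i : Fin s) (j : Fin k) :
    ⨂[ZMod 2] _ : Fin s, FlagRing k m :=
  xT k m s ⟨0, hs⟩ j + xT k m s i j

/-! ### Complete homogeneous polynomials of lists -/

section CompleteHomog

variable {R : Type*} [CommSemiring R]

theorem completeHomog_eq_coeff (l : List R) (d : ℕ) :
    completeHomog l d =
      PowerSeries.coeff d (l.map fun x => PowerSeries.mk fun t => x ^ t).prod := by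
  induction l generalizing d with
  | nil => cases d <;> simp [completeHomog, PowerSeries.coeff_one]
  | cons x l ih =>
    rw [List.map_cons, List.prod_cons, PowerSeries.coeff_mul,
      Finset.Nat.sum_antidiagonal_eq_sum_range_succ_mk, completeHomog]
    simp [ih]

theorem completeHomog_eq_of_perm {l l' : List R} (h : l.Perm l') (d : ℕ) :
    completeHomog l d = completeHomog l' d := by
  rw [completeHomog_eq_coeff, completeHomog_eq_coeff, (h.map _).prod_eq]

theorem completeHomog_zero (l : List R) : completeHomog l 0 = 1 := by
  induction l with
  | nil => rfl
  | cons x l ih => simp [completeHomog, ih]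

theorem completeHomog_singleton (x : R) (d : ℕ) : completeHomog [x] d = x ^ d := by
  simp [completeHomog_eq_coeff]

theorem completeHomog_cons_succ (x : R) (l : List R) (d : ℕ) :
    completeHomog (x :: l) (d + 1) = completeHomog l (d + 1) + x * completeHomog (x :: l) d := by
  rw [completeHomog, Finset.sum_range_succ', completeHomog, Finset.mul_sum, add_comm]
  simp [pow_succ', mul_assoc]

theorem map_completeHomog {S : Type*} [CommSemiring S] (f : R →+* S) (l : List R) (d : ℕ) :
    f (completeHomog l d) = completeHomog (l.map f) d := by
  induction l generalizing d with
  | nil => cases d <;> simp [completeHomog]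
  | cons x l ih => simp [completeHomog, ih]

theorem mul_completeHomog_cons {P x : R} (hx : P * x = 0) (l : List R) (d : ℕ) :
    P * completeHomog (x :: l) d = P * completeHomog l d := by
  cases d with
  | zero => simp only [completeHomog_zero]
  | succ d => rw [completeHomog_cons_succ, mul_add, ← mul_assoc, hx, zero_mul, add_zero]

theorem mul_completeHomog_append {P : R} {l : List R} (hl : ∀ x ∈ l, P * x = 0) (l' : List R)
    (d : ℕ) : P * completeHomog (l ++ l') d = P * completeHomog l' d := by
  induction l with
  | nil => rfl
  | cons x l ih =>
    rw [List.cons_append, mul_completeHomog_cons (hl x List.mem_cons_self),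
      ih fun y hy => hl y (List.mem_cons_of_mem x hy)]

end CompleteHomog

/-! ### Adjoining a root of a complete homogeneous polynomial -/

section CompleteHomogPoly

open Polynomial

/-- The polynomial `h_d(X, a_1, …, a_r)` in one variable `X`, for a list `l = [a_1, …, a_r]`. -/
noncomputable def completeHomogPoly {R : Type*} [CommSemiring R] (l : List R) (d : ℕ) : R[X] :=
  completeHomog (X :: l.map C) d

theorem coeff_completeHomogPoly {R : Type*} [CommSemiring R] (l : List R) (d t : ℕ) :
    (completeHomogPoly l d).coeff t = if t ≤ d then completeHomog l (d - t) else 0 := by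
  simp only [completeHomogPoly, completeHomog, ← map_completeHomog, finsetSum_coeff,
    coeff_mul_C, coeff_X_pow, ite_mul, one_mul, zero_mul, Finset.sum_ite_eq,
    Finset.mem_range, Nat.lt_succ_iff]

theorem natDegree_completeHomogPoly_le {R : Type*} [CommSemiring R] (l : List R) (d : ℕ) :
    (completeHomogPoly l d).natDegree ≤ d :=
  natDegree_le_iff_coeff_eq_zero.2 fun t ht => by
    rw [coeff_completeHomogPoly, if_neg (by omega)]

theorem coeff_completeHomogPoly_self {R : Type*} [CommSemiring R] (l : List R) (d : ℕ) :
    (completeHomogPoly l d).coeff d = 1 := by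
  rw [coeff_completeHomogPoly, if_pos le_rfl, Nat.sub_self, completeHomog_zero]

theorem monic_completeHomogPoly {R : Type*} [CommSemiring R] (l : List R) (d : ℕ) :
    (completeHomogPoly l d).Monic :=
  monic_of_natDegree_le_of_coeff_eq_one d (natDegree_completeHomogPoly_le l d)
    (coeff_completeHomogPoly_self l d)

theorem natDegree_completeHomogPoly {R : Type*} [CommSemiring R] [Nontrivial R] (l : List R)
    (d : ℕ) : (completeHomogPoly l d).natDegree = d :=
  natDegree_eq_of_le_of_coeff_ne_zero (natDegree_completeHomogPoly_le l d)
    (by rw [coeff_completeHomogPoly_self]; exact one_ne_zero)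

theorem completeHomog_root_cons {R : Type*} [CommRing R] (l : List R) (d : ℕ) :
    completeHomog (AdjoinRoot.root (completeHomogPoly l d) :: l.map (AdjoinRoot.of _)) d = 0 := by
  have h : AdjoinRoot.mk (completeHomogPoly l d) (completeHomog (X :: l.map C) d) = 0 :=
    AdjoinRoot.mk_self
  rwa [map_completeHomog, List.map_cons, List.map_map] at h

theorem of_mul_root_pow_ne_zero {R : Type*} [CommRing R] {p : R[X]} (hp : p.Monic) {a : R}
    (ha : a ≠ 0) {t : ℕ} (ht : t < p.natDegree) :
    AdjoinRoot.of p a * AdjoinRoot.root p ^ t ≠ 0 := by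
  have h : AdjoinRoot.mk p (C a * X ^ t) ≠ 0 :=
    AdjoinRoot.mk_ne_zero_of_natDegree_lt hp (by simpa [C_mul_X_pow_eq_monomial] using ha)
      ((natDegree_C_mul_X_pow_le a t).trans_lt ht)
  simpa using h

end CompleteHomogPoly

/-! ### Sequences satisfying the relations of the flag manifold -/

/-- The first `k` terms of `x` satisfy the relations of the generators of `R(k, n - k)`, numbered
so that the `r`-th one is monic in its last variable `x r`. Sequences are indexed by `ℕ`, their
later terms being irrelevant, so that `k` may vary. -/
def IsFlagSequence {R : Type*} [CommSemiring R] (n k : ℕ) (x : ℕ → R) : Prop :=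
  ∀ r < k, completeHomog ((List.range (r + 1)).map x) (n - r) = 0

/-- The product of the `x i ^ (n - 1 - i)` for `i < j`. For `j = k` it represents the top class
of `R(k, n - k)`. -/
def topMonomial {R : Type*} [CommSemiring R] (n : ℕ) (x : ℕ → R) (j : ℕ) : R :=
  ∏ i ∈ Finset.range j, x i ^ (n - 1 - i)

section FlagSequence

variable {R S : Type*} [CommSemiring R] [CommSemiring S] {n k : ℕ} {x : ℕ → R}

theorem topMonomial_zero (n : ℕ) (x : ℕ → R) : topMonomial n x 0 = 1 :=
  Finset.prod_range_zero _

theorem topMonomial_succ (n : ℕ) (x : ℕ → R) (j : ℕ) :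
    topMonomial n x (j + 1) = topMonomial n x j * x j ^ (n - 1 - j) :=
  Finset.prod_range_succ _ j

theorem topMonomial_dvd {i j : ℕ} (hij : i ≤ j) : topMonomial n x i ∣ topMonomial n x j :=
  Finset.prod_dvd_prod_of_subset _ _ _ (Finset.range_subset_range.2 hij)

theorem map_topMonomial (f : R →+* S) (n : ℕ) (x : ℕ → R) (j : ℕ) :
    f (topMonomial n x j) = topMonomial n (f ∘ x) j := by
  simp only [topMonomial, map_prod, map_pow, Function.comp_apply]

theorem topMonomial_congr {y : ℕ → R} {j : ℕ} (h : ∀ i < j, x i = y i) :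
    topMonomial n x j = topMonomial n y j :=
  Finset.prod_congr rfl fun i hi => by rw [h i (Finset.mem_range.1 hi)]

namespace IsFlagSequence

theorem map (hx : IsFlagSequence n k x) (f : R →+* S) : IsFlagSequence n k (f ∘ x) := fun r hr => by
  rw [← List.map_map, ← map_completeHomog, hx r hr, map_zero]

theorem congr {y : ℕ → R} (hx : IsFlagSequence n k x) (h : ∀ i < k, x i = y i) :
    IsFlagSequence n k y := fun r hr => by
  rw [← hx r hr, List.map_congr_left fun i hi => (h i (by have := List.mem_range.1 hi; omega)).symm]

theorem topMonomial_mul_completeHomog (hx : IsFlagSequence n k x) (hkn : k ≤ n) (j s : ℕ)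
    (hjs : j + s < k) :
    topMonomial n x j * completeHomog ((List.range' j (s + 1)).map x) (n - (j + s)) = 0 := by
  induction j using Nat.strong_induction_on generalizing s with
  | _ j ih =>
    have hkill : ∀ i < j, topMonomial n x j * x i = 0 := fun i hi => by
      have hi' : topMonomial n x (i + 1) * x i = 0 := by
        rw [topMonomial_succ, mul_assoc, ← pow_succ, show n - 1 - i + 1 = n - i by omega]
        simpa [completeHomog_singleton] using ih i hi 0 (by omega)
      exact zero_dvd_iff.1 (hi' ▸ mul_dvd_mul_right (topMonomial_dvd hi) (x i))
    have hsplit : List.range j ++ List.range' j (s + 1) = List.range (j + s + 1) := by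
      simpa [← List.range_eq_range', add_assoc] using
        List.range'_append_1 (s := 0) (m := j) (n := s + 1)
    rw [← mul_completeHomog_append (l := (List.range j).map x) (by simpa using hkill),
      ← List.map_append, hsplit, hx _ hjs, mul_zero]

theorem topMonomial_mul_pow (hx : IsFlagSequence n k x) (hkn : k ≤ n) {j : ℕ} (hj : j < k) :
    topMonomial n x j * x j ^ (n - 1 - j + 1) = 0 := by
  rw [show n - 1 - j + 1 = n - j by omega]
  simpa [completeHomog_singleton] using hx.topMonomial_mul_completeHomog hkn j 0 hj

end IsFlagSequence

end FlagSequence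

universe u in
theorem exists_isFlagSequence_topMonomial_ne_zero (F : Type u) [CommRing F]
    [Nontrivial F] {n k : ℕ} (hkn : k ≤ n) :
    ∃ (A : Type u) (_ : CommRing A) (_ : Algebra F A) (x : ℕ → A),
      IsFlagSequence n k x ∧ topMonomial n x k ≠ 0 := by
  induction k with
  | zero => exact ⟨F, inferInstance, inferInstance, 0, by simp [IsFlagSequence],
      by simp [topMonomial_zero]⟩
  | succ k ih =>
    obtain ⟨A, _, _, x, hx, htop⟩ := ih (by omega)
    have : Nontrivial A := ⟨_, _, htop⟩
    let p := completeHomogPoly ((List.range k).map x) (n - k)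
    let y := Function.update (AdjoinRoot.of p ∘ x) k (AdjoinRoot.root p)
    have hyk : y k = AdjoinRoot.root p := Function.update_self ..
    have hy : ∀ i < k, (AdjoinRoot.of p ∘ x) i = y i := fun i hi =>
      (Function.update_of_ne hi.ne _ _).symm
    refine ⟨AdjoinRoot p, inferInstance, inferInstance, y, fun r hr => ?_, ?_⟩
    · rcases Nat.lt_succ_iff_lt_or_eq.1 hr with hr | rfl
      · exact (hx.map (AdjoinRoot.of p)).congr hy r hr
      · have hlist : (List.range r).map y = ((List.range r).map x).map (AdjoinRoot.of p) := by
          rw [List.map_map]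
          exact List.map_congr_left fun i hi => (hy i (List.mem_range.1 hi)).symm
        rw [List.range_succ, List.map_append, List.map_singleton, hlist, hyk,
          completeHomog_eq_of_perm List.perm_append_comm]
        exact completeHomog_root_cons _ _
    · rw [topMonomial_succ, ← topMonomial_congr hy, ← map_topMonomial, hyk]
      exact of_mul_root_pow_ne_zero (monic_completeHomogPoly _ _) htop
        (by rw [natDegree_completeHomogPoly]; omega)

/-! ### Extracting monomials from powers of `x + y` -/

theorem mul_add_pow_of_mul_eq_zero {S : Type*} [CommSemiring S] {P x y : S} (h : P * y = 0)
    (r : ℕ) : P * (x + y) ^ r = P * x ^ r := by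
  induction r with
  | zero => simp
  | succ r ih => rw [pow_succ, ← mul_assoc, ih, mul_add, mul_right_comm P _ y, h, zero_mul,
      add_zero, mul_assoc, ← pow_succ]

theorem cast_choose_prime_pow_sub_one {S : Type*} [Ring S] (p : ℕ) [Fact p.Prime] [CharP S p]
    {s a : ℕ} (ha : a ≤ p ^ s - 1) : (((p ^ s - 1).choose a : ℕ) : S) = (-1) ^ a := by
  have hp := (Fact.out : p.Prime)
  induction a with
  | zero => simp
  | succ a ih =>
    have hpascal : (p ^ s).choose (a + 1) =
        (p ^ s - 1).choose a + (p ^ s - 1).choose (a + 1) := by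
      rw [← Nat.choose_succ_succ', Nat.sub_add_cancel (Nat.pow_pos hp.pos)]
    have hzero : (((p ^ s).choose (a + 1) : ℕ) : S) = 0 :=
      (CharP.cast_eq_zero_iff S p _).2 (hp.dvd_choose_pow (by omega) (by omega))
    rw [hpascal, Nat.cast_add, ih (by omega)] at hzero
    rw [eq_neg_of_add_eq_zero_right hzero, pow_succ, mul_neg_one]

theorem pow_mul_pow_mul_add_pow {S : Type*} [CommSemiring S] {Q x y : S} {a b i j : ℕ}
    (hx : Q * x ^ (a + i + 1) = 0) (hy : Q * y ^ (b + j + 1) = 0) :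
    x ^ i * y ^ j * (Q * (x + y) ^ (a + b)) =
      (a + b).choose a * (Q * (x ^ (a + i) * y ^ (b + j))) := by
  have hzero : ∀ {z : S} {c t : ℕ}, Q * z ^ c = 0 → c ≤ t → Q * z ^ t = 0 := fun h ht =>
    zero_dvd_iff.1 (h ▸ mul_dvd_mul_left Q (pow_dvd_pow _ ht))
  rw [(Commute.all x y).add_pow', Finset.mul_sum, Finset.mul_sum, Finset.sum_eq_single (a, b)]
  · rw [nsmul_eq_mul]
    ring
  · rintro ⟨u, v⟩ huv hne
    have huv : u + v = a + b := Finset.HasAntidiagonal.mem_antidiagonal.1 huv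
    have hvanish : Q * x ^ (i + u) * y ^ (j + v) = 0 := by
      rcases lt_trichotomy u a with hua | rfl | hau
      · rw [mul_right_comm, hzero hy (by omega), zero_mul]
      · exact absurd (by rw [Nat.add_left_cancel huv]) hne
      · rw [hzero hx (by omega), zero_mul]
    rw [nsmul_eq_mul]
    calc x ^ i * y ^ j * (Q * (((a + b).choose u : S) * (x ^ u * y ^ v)))
        = (a + b).choose u * (Q * x ^ (i + u) * y ^ (j + v)) := by ring
      _ = 0 := by rw [hvanish, mul_zero]
  · simp

theorem mul_add_pow_dvd_of_le_add {S : Type*} [CommRing S] (p : ℕ) [Fact p.Prime] [CharP S p]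
    {Q x y : S} {s c d : ℕ} (hx : Q * x ^ (c + 1) = 0) (hy : Q * y ^ (d + 1) = 0)
    (hs : p ^ s - 1 ≤ c + d) : Q * (x + y) ^ (p ^ s - 1) ∣ Q * (x ^ c * y ^ d) := by
  obtain ⟨a, b, i, j, hab, rfl, rfl⟩ :
      ∃ a b i j, p ^ s - 1 = a + b ∧ c = a + i ∧ d = b + j :=
    ⟨min c (p ^ s - 1), p ^ s - 1 - min c (p ^ s - 1), c - min c (p ^ s - 1),
      d - (p ^ s - 1 - min c (p ^ s - 1)), by omega, by omega, by omega⟩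
  have hchoose : ((a + b).choose a : S) = (-1) ^ a := by
    rw [← hab, cast_choose_prime_pow_sub_one p (by omega)]
  refine ⟨(-1) ^ a * (x ^ i * y ^ j), ?_⟩
  rw [hab, mul_comm (Q * _), mul_assoc, pow_mul_pow_mul_add_pow hx hy, hchoose,
    ← mul_assoc ((-1) ^ a), ← mul_pow, neg_one_mul, neg_neg, one_pow, one_mul]

/-! ### Two variables linked by a relation -/

theorem mul_pow_mul_pow_eq_zero {S : Type*} [CommSemiring S] {P u v : S} {a d : ℕ}
    (hu : P * u ^ (a + 1) = 0) (h : P * completeHomog [u, v] d = 0) :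
    P * u ^ a * v ^ d = 0 := by
  have hu' : P * u ^ a * u = 0 := by rw [mul_assoc, ← pow_succ, hu]
  rw [← completeHomog_singleton v, ← mul_completeHomog_cons hu', mul_right_comm, h, zero_mul]

theorem mul_pow_mul_pow_succ {S : Type*} [CommRing S] {P u v : S} {a d : ℕ}
    (hu : P * u ^ (a + 2) = 0) (h : P * completeHomog [u, v] (d + 1) = 0) :
    P * u ^ a * v ^ (d + 1) = -(P * u ^ (a + 1) * v ^ d) := by
  have hu' : P * u ^ (a + 1) * u = 0 := by rw [mul_assoc, ← pow_succ, hu]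
  have hdrop := mul_completeHomog_cons hu' [v] d
  rw [completeHomog_cons_succ, completeHomog_singleton] at h
  rw [completeHomog_singleton] at hdrop
  linear_combination u ^ a * h - hdrop

theorem mul_add_pow_char_pow_add {S : Type*} [CommSemiring S] (p : ℕ) [Fact p.Prime] [CharP S p]
    {Q x y : S} {e : ℕ} (hx : Q * x ^ (p ^ e + 1) = 0) (hy : Q * y ^ (p ^ e + 1) = 0) (r : ℕ) :
    Q * (x + y) ^ (p ^ e + r) = Q * x ^ p ^ e * y ^ r + Q * y ^ p ^ e * x ^ r := by
  have hx' : Q * x ^ p ^ e * x = 0 := by rw [mul_assoc, ← pow_succ, hx]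
  have hy' : Q * y ^ p ^ e * y = 0 := by rw [mul_assoc, ← pow_succ, hy]
  rw [← mul_add_pow_of_mul_eq_zero hx' r, ← mul_add_pow_of_mul_eq_zero hy' r, pow_add,
    add_pow_char_pow]
  ring

section LinkedPair

variable {S : Type*} [CommRing S] (p : ℕ) [Fact p.Prime] [CharP S p] {Q x₁ y₁ x₂ y₂ : S}
  {e r : ℕ}

theorem mul_add_pow_mul_add_pow_char_pow (hr : p ^ e = r + 1)
    (hx₁ : Q * x₁ ^ (p ^ e + 1) = 0) (hy₁ : Q * y₁ ^ (p ^ e + 1) = 0)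
    (hx : Q * completeHomog [x₁, x₂] (p ^ e) = 0)
    (hy : Q * completeHomog [y₁, y₂] (p ^ e) = 0) :
    Q * (x₁ + y₁) ^ (p ^ e + r) * (x₂ + y₂) ^ p ^ e =
      -(Q * (x₁ ^ p ^ e * y₁ ^ p ^ e) * (x₂ ^ r + y₂ ^ r)) := by
  rw [mul_add_pow_char_pow_add p hx₁ hy₁, add_pow_char_pow]
  have hx₂ := mul_pow_mul_pow_eq_zero hx₁ hx
  have hy₂ := mul_pow_mul_pow_eq_zero hy₁ hy
  rw [hr] at hx₁ hy₁ hx hy hx₂ hy₂ ⊢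
  linear_combination y₁ ^ r * hx₂ + x₁ ^ r * hy₂ + y₁ ^ (r + 1) * mul_pow_mul_pow_succ hx₁ hx
    + x₁ ^ (r + 1) * mul_pow_mul_pow_succ hy₁ hy

theorem mul_add_pow_mul_add_pow_dvd (hr : p ^ e = r + 2)
    (hx₁ : Q * x₁ ^ (p ^ e + 1) = 0) (hy₁ : Q * y₁ ^ (p ^ e + 1) = 0)
    (hx : Q * completeHomog [x₁, x₂] (p ^ e) = 0)
    (hy : Q * completeHomog [y₁, y₂] (p ^ e) = 0) :
    Q * (x₁ + y₁) ^ (p ^ e + (r + 1)) * (x₂ + y₂) ^ (p ^ e + r) ∣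
      Q * (x₁ ^ p ^ e * y₁ ^ p ^ e) * (x₂ ^ (r + 1) * y₂ ^ (r + 1)) := by
  have hlinked := mul_add_pow_mul_add_pow_char_pow p hr hx₁ hy₁ hx hy
  have hx₂ := mul_pow_mul_pow_eq_zero hx₁ hx
  have hy₂ := mul_pow_mul_pow_eq_zero hy₁ hy
  have hdrop := mul_add_pow_of_mul_eq_zero
    (P := Q * (x₁ ^ p ^ e * y₁ ^ p ^ e) * y₂ ^ (r + 1)) (x := x₂) (y := y₂)
    (by rw [hr] at hy₂ ⊢; linear_combination x₁ ^ (r + 2) * hy₂) r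
  refine ⟨-x₂, ?_⟩
  rw [pow_add (x₂ + y₂)]
  rw [hr] at hlinked hdrop hx₂ ⊢
  linear_combination x₂ * (x₂ + y₂) ^ r * hlinked - x₂ * hdrop - y₁ ^ (r + 2) * (x₂ + y₂) ^ r * hx₂

end LinkedPair

/-! ### Divisors of the product of two top monomials -/

namespace IsFlagSequence

variable {S : Type*} [CommRing S] {n k : ℕ} {X Y : ℕ → S}

section CharP

variable (p : ℕ) [Fact p.Prime] [CharP S p]

theorem topMonomial_mul_add_pow_dvd (hX : IsFlagSequence n k X) (hY : IsFlagSequence n k Y)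
    (hkn : k ≤ n) {j s : ℕ} (hj : j < k) (hs : p ^ s - 1 ≤ 2 * (n - 1 - j)) :
    topMonomial n X j * topMonomial n Y j * (X j + Y j) ^ (p ^ s - 1) ∣
      topMonomial n X (j + 1) * topMonomial n Y (j + 1) := by
  rw [topMonomial_succ, topMonomial_succ, mul_mul_mul_comm]
  refine mul_add_pow_dvd_of_le_add p ?_ ?_ (by omega)
  · rw [mul_right_comm, hX.topMonomial_mul_pow hkn hj, zero_mul]
  · rw [mul_assoc, hY.topMonomial_mul_pow hkn hj, mul_zero]

theorem prod_add_pow_dvd_of_le (hX : IsFlagSequence n k X) (hY : IsFlagSequence n k Y)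
    (hkn : k ≤ n) {N : ℕ → ℕ} {a b : ℕ} (hab : a ≤ b) (hbk : b ≤ k)
    (hN : ∀ i, a ≤ i → i < b → ∃ s, N i = p ^ s - 1 ∧ p ^ s - 1 ≤ 2 * (n - 1 - i))
    (ha : ∏ i ∈ Finset.range a, (X i + Y i) ^ N i ∣ topMonomial n X a * topMonomial n Y a) :
    ∏ i ∈ Finset.range b, (X i + Y i) ^ N i ∣ topMonomial n X b * topMonomial n Y b := by
  induction b, hab using Nat.le_induction with
  | base => exact ha
  | succ b hab ih =>
    obtain ⟨s, hNb, hs⟩ := hN b hab b.lt_succ_self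
    rw [Finset.prod_range_succ, hNb]
    exact (mul_dvd_mul_right (ih (by omega) fun i hi hib => hN i hi (by omega)) _).trans
      (hX.topMonomial_mul_add_pow_dvd p hY hkn hbk hs)

theorem topMonomial_mul_add_pow_mul_add_pow_dvd (hX : IsFlagSequence n k X)
    (hY : IsFlagSequence n k Y) (hkn : k ≤ n) {e j r : ℕ} (hj : j + 1 < k) (hr : p ^ e = r + 2)
    (hn : n = p ^ e + (j + 1)) :
    topMonomial n X j * topMonomial n Y j * (X j + Y j) ^ (p ^ e + (r + 1)) *
        (X (j + 1) + Y (j + 1)) ^ (p ^ e + r) ∣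
      topMonomial n X (j + 2) * topMonomial n Y (j + 2) := by
  have hpow : ∀ {Z : ℕ → S}, IsFlagSequence n k Z →
      topMonomial n Z j * Z j ^ (p ^ e + 1) = 0 := fun hZ => by
    rw [← hZ.topMonomial_mul_pow hkn (j := j) (by omega), show n - 1 - j = p ^ e by omega]
  have hrel : ∀ {Z : ℕ → S}, IsFlagSequence n k Z →
      topMonomial n Z j * completeHomog [Z j, Z (j + 1)] (p ^ e) = 0 := fun hZ => by
    have h := hZ.topMonomial_mul_completeHomog hkn j 1 hj
    rwa [show n - (j + 1) = p ^ e by omega] at h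
  have h := mul_add_pow_mul_add_pow_dvd p (Q := topMonomial n X j * topMonomial n Y j) hr
    (by rw [mul_right_comm, hpow hX, zero_mul]) (by rw [mul_assoc, hpow hY, mul_zero])
    (by rw [mul_right_comm, hrel hX, zero_mul]) (by rw [mul_assoc, hrel hY, mul_zero])
  convert h using 1
  rw [topMonomial_succ, topMonomial_succ, topMonomial_succ, topMonomial_succ,
    show n - 1 - j = p ^ e by omega, show n - 1 - (j + 1) = r + 1 by omega]
  ring

end CharP

end IsFlagSequence

/-- The exponent of `z_{i+1}` in the product shown to be nonzero, where `l = k - δ`. -/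
def zExponent (l e i : ℕ) : ℕ :=
  if i < l then 2 ^ (e + 1) - 1 else if i = l then 2 ^ (e + 1) - 2 else 2 ^ e - 1

theorem IsFlagSequence.prod_add_pow_zExponent_dvd {S : Type*} [CommRing S] [CharP S 2]
    {l δ e : ℕ} (hl : 0 < l) (he : 2 * δ ≤ 2 ^ e) {X Y : ℕ → S}
    (hX : IsFlagSequence (2 ^ e + l) (l + δ) X) (hY : IsFlagSequence (2 ^ e + l) (l + δ) Y) :
    ∏ i ∈ Finset.range (l + δ), (X i + Y i) ^ zExponent l e i ∣
      topMonomial (2 ^ e + l) X (l + δ) * topMonomial (2 ^ e + l) Y (l + δ) := by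
  have hfirst : ∀ j ≤ l, ∏ i ∈ Finset.range j, (X i + Y i) ^ zExponent l e i ∣
      topMonomial (2 ^ e + l) X j * topMonomial (2 ^ e + l) Y j := fun j hj => by
    refine hX.prod_add_pow_dvd_of_le 2 hY (by omega) j.zero_le (by omega) (fun i _ hi => ?_)
      (by simp)
    exact ⟨e + 1, if_pos (by omega), by omega⟩
  rcases δ.eq_zero_or_pos with rfl | hδ
  · exact hfirst l le_rfl
  obtain ⟨l, rfl⟩ := Nat.exists_eq_add_one.2 hl
  obtain ⟨r, hr⟩ : ∃ r, 2 ^ e = r + 2 := ⟨2 ^ e - 2, by omega⟩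
  have hcritical : ∏ i ∈ Finset.range (l + 2), (X i + Y i) ^ zExponent (l + 1) e i ∣
      topMonomial (2 ^ e + (l + 1)) X (l + 2) * topMonomial (2 ^ e + (l + 1)) Y (l + 2) := by
    have hNl : zExponent (l + 1) e l = 2 ^ e + (r + 1) := by
      rw [zExponent, if_pos l.lt_succ_self]
      omega
    have hNl' : zExponent (l + 1) e (l + 1) = 2 ^ e + r := by
      rw [zExponent, if_neg (lt_irrefl _), if_pos rfl]
      omega
    rw [Finset.prod_range_succ, Finset.prod_range_succ, hNl, hNl']
    exact (mul_dvd_mul_right (mul_dvd_mul_right (hfirst l (by omega)) _) _).trans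
      (hX.topMonomial_mul_add_pow_mul_add_pow_dvd 2 hY (by omega) (by omega) hr rfl)
  refine hX.prod_add_pow_dvd_of_le 2 hY (by omega) (by omega) le_rfl (fun i hi hik => ?_) hcritical
  exact ⟨e, by rw [zExponent, if_neg (by omega), if_neg (by omega)], by omega⟩

/-! ### The flag ring -/

theorem map_completeHomog_take_X {F A : Type*} [CommSemiring F] [CommSemiring A] {k r : ℕ}
    {f : MvPolynomial (Fin k) F →+* A} {x : ℕ → A} (hf : ∀ i : Fin k, f (MvPolynomial.X i) = x i)
    (hr : r ≤ k) (d : ℕ) :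
    f (completeHomog (((List.finRange k).take r).map MvPolynomial.X) d) =
      completeHomog ((List.range r).map x) d := by
  have hval : ((List.finRange k).take r).map Fin.val = List.range r := by
    rw [List.map_take, List.map_coe_finRange_eq_range, List.take_range, min_eq_left hr]
  rw [map_completeHomog, ← hval, List.map_map, List.map_map]
  simp only [Function.comp_def, hf]

/-- The generators of `R(k,m)` as a sequence, extended by `0`. -/
noncomputable def xSeq (k m i : ℕ) : FlagRing k m :=
  if h : i < k then xGen k m ⟨i, h⟩ else 0

theorem xSeq_coe (k m : ℕ) (i : Fin k) : xSeq k m i = xGen k m i :=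
  dif_pos i.isLt

theorem isFlagSequence_xSeq (k m : ℕ) : IsFlagSequence (m + k) k (xSeq k m) := fun r hr => by
  rw [← map_completeHomog_take_X (f := Ideal.Quotient.mk (flagIdeal k m))
    (fun i => (xSeq_coe k m i).symm) hr, Ideal.Quotient.eq_zero_iff_mem]
  refine Ideal.subset_span ⟨k - r, by omega, by omega, ?_⟩
  rw [show k + 1 - (k - r) = r + 1 by omega, show m + (k - r) = m + k - r by omega]

theorem flagIdeal_le_ker_aeval {A : Type*} [CommRing A] [Algebra (ZMod 2) A] {k m : ℕ}
    {x : ℕ → A} (hx : IsFlagSequence (m + k) k x) :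
    flagIdeal k m ≤ RingHom.ker (MvPolynomial.aeval (R := ZMod 2) fun i : Fin k => x i) := by
  refine Ideal.span_le.2 ?_
  rintro _ ⟨i, hi, hik, rfl⟩
  have h := hx (k - i) (by omega)
  rw [show m + k - (k - i) = m + i by omega, show k - i + 1 = k + 1 - i by omega] at h
  exact (map_completeHomog_take_X (f := (MvPolynomial.aeval fun i : Fin k => x i).toRingHom)
    (fun i => MvPolynomial.aeval_X _ i) (by omega) _).trans h

theorem topMonomial_xSeq_ne_zero (k m : ℕ) : topMonomial (m + k) (xSeq k m) k ≠ 0 := by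
  obtain ⟨A, _, _, x, hx, htop⟩ :=
    exists_isFlagSequence_topMonomial_ne_zero (ZMod 2) (k.le_add_left m)
  let ψ : FlagRing k m →ₐ[ZMod 2] A := Ideal.Quotient.liftₐ (flagIdeal k m)
    (MvPolynomial.aeval fun i : Fin k => x i) (flagIdeal_le_ker_aeval hx)
  have hψ : ∀ i < k, ψ (xSeq k m i) = x i := fun i hi => by
    rw [xSeq_coe k m ⟨i, hi⟩]
    exact MvPolynomial.aeval_X _ _
  intro h0
  apply htop
  rw [← topMonomial_congr hψ, ← map_zero ψ, ← h0]
  exact (map_topMonomial ψ.toRingHom _ _ _).symm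

theorem tmul_ne_zero {R V W : Type*} [CommSemiring R] [NoZeroDivisors R] [AddCommMonoid V]
    [Module R V] [Module.Projective R V] [AddCommMonoid W] [Module R W] [Module.Projective R W]
    {v : V} {w : W} (hv : v ≠ 0) (hw : w ≠ 0) : v ⊗ₜ[R] w ≠ 0 := by
  obtain ⟨φ, hφ⟩ := Module.Projective.exists_dual_ne_zero R hv
  obtain ⟨ψ, hψ⟩ := Module.Projective.exists_dual_ne_zero R hw
  intro h
  have h' := congrArg (LinearMap.mul' R R ∘ₗ TensorProduct.map φ ψ) h
  simp [hφ, hψ] at h'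

theorem prod_tmul_one_add_one_tmul_pow_ne_zero {K R : Type*} [Field K] [CharP K 2] [CommRing R]
    [Algebra K R] {l δ e : ℕ} (hl : 0 < l) (he : 2 * δ ≤ 2 ^ e) {x : ℕ → R}
    (hx : IsFlagSequence (2 ^ e + l) (l + δ) x)
    (htop : topMonomial (2 ^ e + l) x (l + δ) ≠ 0) :
    ∏ i ∈ Finset.range (l + δ), (x i ⊗ₜ[K] 1 + 1 ⊗ₜ[K] x i) ^ zExponent l e i ≠ 0 := by
  let ι₁ : R →+* R ⊗[K] R := Algebra.TensorProduct.includeLeftRingHom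
  let ι₂ : R →+* R ⊗[K] R := (Algebra.TensorProduct.includeRight : R →ₐ[K] R ⊗[K] R).toRingHom
  have htop' : ι₁ (topMonomial (2 ^ e + l) x (l + δ)) *
      ι₂ (topMonomial (2 ^ e + l) x (l + δ)) ≠ 0 := by
    simpa [ι₁, ι₂] using tmul_ne_zero (R := K) htop htop
  have : Nontrivial (R ⊗[K] R) := ⟨_, _, htop'⟩
  have : CharP (R ⊗[K] R) 2 := charP_of_injective_algebraMap (algebraMap K _).injective 2
  rw [map_topMonomial, map_topMonomial] at htop'
  exact ne_zero_of_dvd_ne_zero htop' ((hx.map ι₁).prod_add_pow_zExponent_dvd hl he (hx.map ι₂))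

theorem prod_zGen_pow_zExponent_ne_zero {l δ e : ℕ} (hl : 0 < l) (he : 2 * δ ≤ 2 ^ e) :
    ∏ i, zGen (l + δ) (2 ^ e - δ) i ^ zExponent l e i ≠ 0 := by
  have hx := isFlagSequence_xSeq (l + δ) (2 ^ e - δ)
  have htop := topMonomial_xSeq_ne_zero (l + δ) (2 ^ e - δ)
  rw [show 2 ^ e - δ + (l + δ) = 2 ^ e + l by omega] at hx htop
  have h := prod_tmul_one_add_one_tmul_pow_ne_zero (K := ZMod 2) hl he hx htop
  rw [Finset.prod_range] at h
  simpa only [zGen, xSeq_coe] using h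

theorem prod_filter_pow_mul_prod_filter_pow {ι α M : Type*} [LinearOrder α] [CommMonoid M]
    (t : Finset ι) (v : ι → α) (l : α) (f : ι → M) (a b c : ℕ) :
    (∏ i ∈ t with v i < l, f i) ^ a * (∏ i ∈ t with v i = l, f i) ^ b *
        (∏ i ∈ t with l < v i, f i) ^ c =
      ∏ i ∈ t, f i ^ (if v i < l then a else if v i = l then b else c) := by
  simp only [← Finset.prod_pow, Finset.prod_filter, ← Finset.prod_mul_distrib]
  refine Finset.prod_congr rfl fun i _ => ?_
  rcases lt_trichotomy (v i) l with h | h | h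
  · simp [h, h.ne, h.not_gt]
  · simp [h]
  · simp [h, h.ne', h.not_gt]

/-- for `0 ≤ δ < k`, `2δ ≤ 2^e` and `m = 2^e - δ > 0`,
`(z_1 ⋯ z_{k-δ})^{2^{e+1}-1} · z_{k-δ+1}^{2^{e+1}-2} · (z_{k-δ+2} ⋯ z_k)^{2^e-1} ≠ 0`
in `R(k,m) ⊗ R(k,m)` (a factor being omitted — here: an empty product — when its
index range is empty, e.g. for `δ = 0`). -/
theorem statement12 (k δ e : ℕ) (hk : 0 < k) (hδ : δ < k) (he : 2 * δ ≤ 2 ^ e)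
    (hm : 0 < 2 ^ e - δ) :
    (∏ j ∈ Finset.univ.filter (fun j : Fin k => j.val < k - δ),
        zGen k (2 ^ e - δ) j) ^ (2 ^ (e + 1) - 1) *
      (∏ j ∈ Finset.univ.filter (fun j : Fin k => j.val = k - δ),
        zGen k (2 ^ e - δ) j) ^ (2 ^ (e + 1) - 2) *
      (∏ j ∈ Finset.univ.filter (fun j : Fin k => k - δ < j.val),
        zGen k (2 ^ e - δ) j) ^ (2 ^ e - 1) ≠ 0 := by
  obtain ⟨l, rfl⟩ : ∃ l, k = l + δ := ⟨k - δ, by omega⟩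
  rw [Nat.add_sub_cancel, prod_filter_pow_mul_prod_filter_pow]
  exact prod_zGen_pow_zExponent_ne_zero (by omega) he
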